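/- arXiv:1112.5415 — 3 statements merged into one kernel-verified Lean document; each statement's English description precedes it below -/
import Mathlib

section
/- For every injective sequence (ρ_n)_{n∈ℕ} of positive roots in Φ⁺ and every norm ‖·‖ on V, the sequence of norms ‖ρ_n‖ tends to infinity. -/
open Filter Topology

noncomputable section

variable {ι V : Type*} [Fintype ι] [NormedAddCommGroup V] [NormedSpace ℝ V]

/-- The set of simple `B`-reflections: the linear automorphisms of `V` given by the
`B`-reflection formula `u ↦ u - 2 (B α u / B α α) • α` associated to a simple root `α ∈ Δ`. -/
def simpleReflections (B : LinearMap.BilinForm ℝ V) (Δ : Module.Basis ι ℝ V) :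
    Set (V ≃ₗ[ℝ] V) :=
  { e | ∃ i : ι, ∀ u : V, e u = u - (2 * B (Δ i) u / B (Δ i) (Δ i)) • Δ i }

/-- The geometric Coxeter group `W`: the subgroup of linear automorphisms of `V`
generated by the simple `B`-reflections. -/
def cox (B : LinearMap.BilinForm ℝ V) (Δ : Module.Basis ι ℝ V) : Subgroup (V ≃ₗ[ℝ] V) :=
  Subgroup.closure (simpleReflections B Δ)

/-- The root system `Φ = W ⬝ Δ`. -/
def Phi (B : LinearMap.BilinForm ℝ V) (Δ : Module.Basis ι ℝ V) : Set V :=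
  { ρ | ∃ w ∈ cox B Δ, ∃ i : ι, w (Δ i) = ρ }

/-- The positive roots `Φ⁺ = Φ ∩ cone(Δ)`. -/
def posPhi (B : LinearMap.BilinForm ℝ V) (Δ : Module.Basis ι ℝ V) : Set V :=
  { ρ ∈ Phi B Δ | ∀ i : ι, 0 ≤ Δ.repr ρ i }

/-- `|v|₁`: the sum of the coordinates of `v` in the basis `Δ`. -/
def l1 (Δ : Module.Basis ι ℝ V) (v : V) : ℝ := ∑ i : ι, Δ.repr v i

/-- The normalization map `v ↦ v̂ = v / |v|₁`. -/
def nrm (Δ : Module.Basis ι ℝ V) (v : V) : V := (l1 Δ v)⁻¹ • v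

/-- The set `Φ̂` of normalized roots. -/
def nPhi (B : LinearMap.BilinForm ℝ V) (Δ : Module.Basis ι ℝ V) : Set V :=
  nrm Δ '' posPhi B Δ

/-- `E(Φ)`: the set of accumulation points of the set of normalized roots. -/
def Eset (B : LinearMap.BilinForm ℝ V) (Δ : Module.Basis ι ℝ V) : Set V :=
  { x | AccPt x (𝓟 (nPhi B Δ)) }

/-- The isotropic cone `Q` of `B`. -/
def isoQ (B : LinearMap.BilinForm ℝ V) : Set V := { v | B v v = 0 }

namespace CoxAux

/-- Simple reflection as an endomorphism. -/
def rf (B : LinearMap.BilinForm ℝ V) (x : V) : Module.End ℝ V :=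
  LinearMap.id - (2 : ℝ) • (B x).smulRight x

theorem rf_apply (B : LinearMap.BilinForm ℝ V) (x v : V) :
    rf B x v = v - (2 * B x v) • x := by
  simp [rf, smul_smul]

/-- Word product. -/
def wd (B : LinearMap.BilinForm ℝ V) (Δ : Module.Basis ι ℝ V) (L : List ι) : Module.End ℝ V :=
  (L.map (fun i => rf B (Δ i))).prod

theorem wd_nil (B : LinearMap.BilinForm ℝ V) (Δ : Module.Basis ι ℝ V) : wd B Δ [] = 1 := by
  simp [wd]

theorem wd_cons (B : LinearMap.BilinForm ℝ V) (Δ : Module.Basis ι ℝ V) (i : ι) (L : List ι) :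
    wd B Δ (i :: L) = rf B (Δ i) * wd B Δ L := by
  simp [wd]

theorem wd_append (B : LinearMap.BilinForm ℝ V) (Δ : Module.Basis ι ℝ V) (L M : List ι) :
    wd B Δ (L ++ M) = wd B Δ L * wd B Δ M := by
  simp [wd]

theorem rf_sq (B : LinearMap.BilinForm ℝ V) (x : V) (hx : B x x = 1) :
    rf B x * rf B x = 1 := by
  ext v
  simp only [Module.End.mul_apply, rf_apply, map_sub, map_smul, hx, smul_eq_mul, Module.End.one_apply]
  module

theorem rf_iso (B : LinearMap.BilinForm ℝ V) (hsymm : ∀ u v : V, B u v = B v u)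
    (x : V) (hx : B x x = 1) (u v : V) : B (rf B x u) (rf B x v) = B u v := by
  simp only [rf_apply, map_sub, map_smul, hx, smul_eq_mul, LinearMap.sub_apply,
    LinearMap.smul_apply, hsymm u x]
  ring

theorem wd_iso (B : LinearMap.BilinForm ℝ V) (Δ : Module.Basis ι ℝ V)
    (hsymm : ∀ u v : V, B u v = B v u) (hdiag : ∀ i : ι, B (Δ i) (Δ i) = 1)
    (L : List ι) (u v : V) : B (wd B Δ L u) (wd B Δ L v) = B u v := by
  induction L with
  | nil => simp [wd_nil]
  | cons i L ih =>
    simp only [wd_cons, Module.End.mul_apply, rf_iso B hsymm _ (hdiag i), ih]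

theorem wd_conj (B : LinearMap.BilinForm ℝ V) (Δ : Module.Basis ι ℝ V)
    (hsymm : ∀ u v : V, B u v = B v u) (hdiag : ∀ i : ι, B (Δ i) (Δ i) = 1)
    (L : List ι) (x : V) :
    rf B (wd B Δ L x) * wd B Δ L = wd B Δ L * rf B x := by
  ext v
  simp only [Module.End.mul_apply, rf_apply, map_sub, map_smul, wd_iso B Δ hsymm hdiag]

theorem wd_rev (B : LinearMap.BilinForm ℝ V) (Δ : Module.Basis ι ℝ V)
    (hdiag : ∀ i : ι, B (Δ i) (Δ i) = 1) (L : List ι) :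
    wd B Δ L * wd B Δ L.reverse = 1 := by
  induction L with
  | nil => simp [wd_nil]
  | cons i L ih =>
    rw [List.reverse_cons, wd_append, wd_cons, wd_cons, wd_nil, mul_one]
    calc _ = rf B (Δ i) * (wd B Δ L * wd B Δ L.reverse) * rf B (Δ i) := by simp only [mul_assoc]
      _ = 1 := by rw [ih, mul_one, rf_sq B _ (hdiag i)]

theorem wd_rev' (B : LinearMap.BilinForm ℝ V) (Δ : Module.Basis ι ℝ V)
    (hdiag : ∀ i : ι, B (Δ i) (Δ i) = 1) (L : List ι) :
    wd B Δ L.reverse * wd B Δ L = 1 := by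
  simpa using wd_rev B Δ hdiag L.reverse

/-- Chebyshev-like sequence. -/
def U (p : ℝ) : ℕ → ℝ
  | 0 => 0
  | 1 => 1
  | (n+2) => 2 * p * U p (n+1) - U p n

theorem U_ge (p : ℝ) (hp : 1 ≤ p) (n : ℕ) : 0 ≤ U p n ∧ U p n ≤ U p (n+1) := by
  induction n with
  | zero => simp [U]
  | succ n ih =>
    refine ⟨ih.1.trans ih.2, ?_⟩
    rw [U]
    nlinarith [ih.1, ih.2]

theorem U_cos (θ : ℝ) (n : ℕ) : U (Real.cos θ) n * Real.sin θ = Real.sin (n * θ) ∧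
    U (Real.cos θ) (n+1) * Real.sin θ = Real.sin ((n+1 : ℕ) * θ) := by
  induction n with
  | zero => simp [U]
  | succ n ih =>
    refine ⟨ih.2, ?_⟩
    rw [U, sub_mul, mul_assoc, ih.1, ih.2]
    have h1 : ((n + 1 + 1 : ℕ) : ℝ) * θ = ((n+1 : ℕ) : ℝ) * θ + θ := by push_cast; ring
    have h2 : (n : ℝ) * θ = ((n+1 : ℕ) : ℝ) * θ - θ := by push_cast; ring
    rw [h1, h2, Real.sin_add, Real.sin_sub]
    ring

/-- Next letter. -/
def nx (s t : ι) (n : ℕ) : ι := if Even n then t else s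

/-- Alternating word. -/
def alt (s t : ι) : ℕ → List ι
  | 0 => []
  | (n+1) => nx s t n :: alt s t n

theorem alt_length (s t : ι) (n : ℕ) : (alt s t n).length = n := by
  induction n with
  | zero => rfl
  | succ n ih => simp [alt, ih]

theorem nx_succ_succ (s t : ι) (n : ℕ) : nx s t (n+2) = nx s t n := by
  simp [nx, Nat.even_add]

theorem B_nx (B : LinearMap.BilinForm ℝ V) (Δ : Module.Basis ι ℝ V)
    (hsymm : ∀ u v : V, B u v = B v u) (s t : ι) (n : ℕ) :
    B (Δ (nx s t n)) (Δ (nx s t (n+1))) = B (Δ s) (Δ t) := by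
  unfold nx
  by_cases h : Even n
  · have : ¬ Even (n+1) := by simpa [Nat.even_add_one] using h
    simp [h, this, hsymm (Δ t)]
  · have : Even (n+1) := by simpa [Nat.even_add_one] using h
    simp [h, this]

theorem alt_root (B : LinearMap.BilinForm ℝ V) (Δ : Module.Basis ι ℝ V)
    (hsymm : ∀ u v : V, B u v = B v u) (hdiag : ∀ i : ι, B (Δ i) (Δ i) = 1)
    (s t : ι) (n : ℕ) :
    wd B Δ (alt s t n) (Δ s) = U (- B (Δ s) (Δ t)) (n+1) • Δ (nx s t (n+1))
      + U (- B (Δ s) (Δ t)) n • Δ (nx s t n) := by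
  induction n with
  | zero => simp [alt, wd_nil, U, nx]
  | succ n ih =>
    rw [alt, wd_cons, Module.End.mul_apply, ih, rf_apply, nx_succ_succ, U]
    simp only [map_add, map_smul, hdiag, smul_eq_mul, B_nx B Δ hsymm]
    module

/-- Good word with respect to `s`. -/
def Good (B : LinearMap.BilinForm ℝ V) (Δ : Module.Basis ι ℝ V) (s : ι) (L : List ι) : Prop :=
  (∀ L', wd B Δ L' = wd B Δ L → L.length ≤ L'.length) ∧
  (∀ L', wd B Δ L' = wd B Δ L * rf B (Δ s) → L.length ≤ L'.length)

theorem Good.suffix {B : LinearMap.BilinForm ℝ V} {Δ : Module.Basis ι ℝ V} {s : ι}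
    {A M : List ι} (h : Good B Δ s (A ++ M)) : Good B Δ s M := by
  constructor
  · intro L' hL'
    have := h.1 (A ++ L') (by rw [wd_append, wd_append, hL'])
    simpa using this
  · intro L' hL'
    have := h.2 (A ++ L') (by rw [wd_append, wd_append, hL', mul_assoc])
    simpa using this

theorem good_alt (B : LinearMap.BilinForm ℝ V) (Δ : Module.Basis ι ℝ V)
    (hdiag : ∀ i : ι, B (Δ i) (Δ i) = 1) (s t : ι) (M : List ι)
    (hM : ∀ x ∈ M, x = s ∨ x = t) (hg : Good B Δ s M) : M = alt s t M.length := by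
  induction M with
  | nil => rfl
  | cons x M ih =>
    have h1 : Good B Δ s M := Good.suffix (A := [x]) hg
    have h2 := ih (fun y hy => hM y (by simp [hy])) h1
    have hx := hM x (by simp)
    rw [List.length_cons, alt, ← h2]
    congr 1
    by_contra hne
    obtain hn | ⟨n, hn⟩ : M.length = 0 ∨ ∃ n, M.length = n + 1 := by
      cases M.length <;> simp
    · have hM0 : M = [] := List.length_eq_zero_iff.mp hn
      subst hM0
      have hxs : x = s := by
        rcases hx with h | h
        · exact h
        · exact absurd h (by simpa [nx] using hne)
      subst hxs
      have := hg.2 [] (by rw [wd_cons, wd_nil, mul_one, rf_sq B _ (hdiag x)])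
      simp at this
    · rw [hn] at hne h2
      have hxn : x = nx s t n := by
        unfold nx at hne ⊢
        by_cases h : Even n
        · have : ¬ Even (n+1) := by simpa [Nat.even_add_one] using h
          simp only [this, h, if_true, if_false] at hne ⊢
          tauto
        · have : Even (n+1) := by simpa [Nat.even_add_one] using h
          simp only [this, h, if_true, if_false] at hne ⊢
          tauto
      have := hg.1 (alt s t n) (by
        rw [h2, alt, wd_cons, wd_cons, hxn, ← mul_assoc, rf_sq B _ (hdiag _), one_mul])
      rw [alt_length, List.length_cons, hn] at this
      omega

theorem good_alt_le (B : LinearMap.BilinForm ℝ V) (Δ : Module.Basis ι ℝ V) (s t : ι) (n m : ℕ)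
    (h : Good B Δ s (alt s t (m + n))) : Good B Δ s (alt s t n) := by
  induction m with
  | zero => simpa using h
  | succ m ih =>
    apply ih
    rw [show m + 1 + n = (m + n) + 1 by ring, alt] at h
    exact Good.suffix (A := [_]) h

theorem dihedral (B : LinearMap.BilinForm ℝ V) (Δ : Module.Basis ι ℝ V)
    (hsymm : ∀ u v : V, B u v = B v u)
    (hdiag : ∀ i : ι, B (Δ i) (Δ i) = 1) (s t : ι)
    (hoff : B (Δ s) (Δ t) ≤ -1 ∨
      ∃ k : ℕ, 2 ≤ k ∧ B (Δ s) (Δ t) = -Real.cos (Real.pi / (k : ℝ))) (M : List ι)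
    (hM : ∀ x ∈ M, x = s ∨ x = t) (hg : Good B Δ s M) :
    ∃ a b : ℝ, 0 ≤ a ∧ 0 ≤ b ∧ wd B Δ M (Δ s) = a • Δ s + b • Δ t := by
  have hMa := good_alt B Δ hdiag s t M hM hg
  set n := M.length with hn
  rw [hMa] at hg ⊢
  rw [alt_root B Δ hsymm hdiag]
  suffices h : 0 ≤ U (- B (Δ s) (Δ t)) n ∧ 0 ≤ U (- B (Δ s) (Δ t)) (n+1) by
    unfold nx
    by_cases he : Even n
    · have : ¬ Even (n+1) := by simpa [Nat.even_add_one] using he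
      simp only [this, he, if_true, if_false]
      exact ⟨_, _, h.2, h.1, rfl⟩
    · have : Even (n+1) := by simpa [Nat.even_add_one] using he
      simp only [this, he, if_true, if_false]
      exact ⟨_, _, h.1, h.2, add_comm _ _⟩
  rcases hoff with h | ⟨k, hk, h⟩
  · have := U_ge (- B (Δ s) (Δ t)) (by linarith) n
    exact ⟨this.1, this.1.trans this.2⟩
  · have hk0 : (0 : ℝ) < k := by positivity
    have hk2 : (2 : ℝ) ≤ k := by exact_mod_cast hk
    set θ := Real.pi / (k : ℝ) with hθ
    have hkθ : k * θ = Real.pi := by rw [hθ]; field_simp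
    have hθ0 : 0 < θ := by have := Real.pi_pos; positivity
    have hsin : 0 < Real.sin θ := Real.sin_pos_of_pos_of_lt_pi hθ0 (by nlinarith)
    rw [h, neg_neg]
    have hnn : ∀ m : ℕ, m ≤ k → 0 ≤ U (Real.cos θ) m := by
      intro m hm
      have h1 := (U_cos θ m).1
      have hm' : (m : ℝ) ≤ k := by exact_mod_cast hm
      have h2 : 0 ≤ Real.sin (m * θ) := Real.sin_nonneg_of_nonneg_of_le_pi (by positivity)
        (by rw [← hkθ]; gcongr)
      rw [← h1] at h2
      exact nonneg_of_mul_nonneg_left h2 hsin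
    have hlt : n < k := by
      by_contra hge
      push Not at hge
      obtain ⟨m, hm⟩ := Nat.exists_eq_add_of_le' hge
      rw [hm] at hg
      have hgk := good_alt_le B Δ s t k m hg
      obtain ⟨j, rfl⟩ : ∃ j, k = j + 1 := ⟨k - 1, by omega⟩
      have hu1 : U (Real.cos θ) (j+1) = 0 := by
        have h1 := (U_cos θ (j+1)).1
        rw [hkθ, Real.sin_pi] at h1
        exact (mul_eq_zero.mp h1).resolve_right hsin.ne'
      have hu0 : U (Real.cos θ) j = 1 := by
        have h1 := (U_cos θ j).1
        have : (j : ℝ) * θ = Real.pi - θ := by rw [← hkθ]; push_cast; ring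
        rw [this, Real.sin_pi_sub] at h1
        exact mul_right_cancel₀ hsin.ne' (by rw [h1, one_mul])
      have hr := alt_root B Δ hsymm hdiag s t j
      rw [h, neg_neg, hu1, hu0, zero_smul, zero_add, one_smul] at hr
      have hc := wd_conj B Δ hsymm hdiag (alt s t j) (Δ s)
      rw [hr] at hc
      have := hgk.2 (alt s t j) (by
        rw [alt, wd_cons, hc, mul_assoc, rf_sq B _ (hdiag s), mul_one])
      rw [alt_length, alt_length] at this
      omega
    exact ⟨hnn n hlt.le, hnn (n+1) hlt⟩

theorem main_pos (B : LinearMap.BilinForm ℝ V) (Δ : Module.Basis ι ℝ V)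
    (hsymm : ∀ u v : V, B u v = B v u)
    (hdiag : ∀ i : ι, B (Δ i) (Δ i) = 1)
    (hoff : ∀ i j : ι, i ≠ j → B (Δ i) (Δ j) ≤ -1 ∨
      ∃ k : ℕ, 2 ≤ k ∧ B (Δ i) (Δ j) = -Real.cos (Real.pi / (k : ℝ)))
    (n : ℕ) : ∀ (L : List ι) (s : ι), L.length = n → Good B Δ s L →
      ∀ i, 0 ≤ Δ.repr (wd B Δ L (Δ s)) i := by
  classical
  induction n using Nat.strong_induction_on with
  | _ n ih =>
  intro L s hL hg
  rcases List.eq_nil_or_concat L with rfl | ⟨L0, t, rfl⟩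
  · intro i
    rw [wd_nil, Module.End.one_apply, Module.Basis.repr_self, Finsupp.single_apply]
    split_ifs <;> simp
  · rw [List.concat_eq_append] at *
    set L := L0 ++ [t] with hLdef
    have hst : s ≠ t := by
      rintro rfl
      have := hg.2 L0 (by
        rw [hLdef, wd_append, wd_cons, wd_nil, mul_one, mul_assoc, rf_sq B _ (hdiag s), mul_one])
      simp [hLdef] at this
    let P : ℕ → Prop := fun m => ∃ A M : List ι, M.length = m ∧ (∀ x ∈ M, x = s ∨ x = t) ∧
      wd B Δ (A ++ M) = wd B Δ L ∧ A.length + M.length = L.length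
    have hP1 : P 1 := ⟨L0, [t], rfl, by simp, rfl, by simp [hLdef]⟩
    have hLpos : 1 ≤ L.length := by simp [hLdef]
    have hspec := Nat.findGreatest_spec (P := P) hLpos hP1
    have hm1 : 1 ≤ Nat.findGreatest P L.length := Nat.le_findGreatest hLpos hP1
    have hmax : ∀ k, Nat.findGreatest P L.length < k → k ≤ L.length → ¬ P k :=
      fun k => Nat.findGreatest_is_greatest
    set m := Nat.findGreatest P L.length
    obtain ⟨A, M, hMm, hMst, hwd, hlen⟩ := hspec
    have hgAM : Good B Δ s (A ++ M) := by
      constructor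
      · intro L' h; rw [List.length_append, hlen]; exact hg.1 L' (h.trans hwd)
      · intro L' h; rw [List.length_append, hlen]; exact hg.2 L' (by rw [h, hwd])
    have hgM := hgAM.suffix
    have hgA : ∀ x, (x = s ∨ x = t) → Good B Δ x A := by
      intro x hx
      constructor
      · intro L' h
        have := hgAM.1 (L' ++ M) (by rw [wd_append, wd_append, h])
        simpa using this
      · intro L' h
        by_contra hlt
        push Not at hlt
        have hw : wd B Δ (L' ++ x :: M) = wd B Δ L := by
          rw [← hwd, wd_append, wd_append, wd_cons, h, mul_assoc, ← mul_assoc (rf B (Δ x)),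
            rf_sq B _ (hdiag x), one_mul]
        have h1 : L.length ≤ L'.length + (M.length + 1) :=
          (hg.1 _ hw).trans_eq (by rw [List.length_append, List.length_cons])
        refine hmax (m+1) (by omega) (by omega) ⟨L', x :: M, by simp [hMm], ?_, hw, ?_⟩
        · intro y hy
          rcases List.mem_cons.mp hy with rfl | hy
          · exact hx
          · exact hMst y hy
        · rw [List.length_cons]; omega
    have ps := ih A.length (by omega) A s rfl (hgA s (Or.inl rfl))
    have pt := ih A.length (by omega) A t rfl (hgA t (Or.inr rfl))
    obtain ⟨a, b, ha, hb, hab⟩ := dihedral B Δ hsymm hdiag s t (hoff s t hst) M hMst hgM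
    intro i
    rw [← hwd, wd_append, Module.End.mul_apply, hab]
    simp only [map_add, map_smul, Finsupp.add_apply, Finsupp.smul_apply, smul_eq_mul]
    have := ps i
    have := pt i
    positivity

theorem discrete (B : LinearMap.BilinForm ℝ V) (Δ : Module.Basis ι ℝ V)
    (hsymm : ∀ u v : V, B u v = B v u)
    (hdiag : ∀ i : ι, B (Δ i) (Δ i) = 1)
    (hoff : ∀ i j : ι, i ≠ j → B (Δ i) (Δ j) ≤ -1 ∨
      ∃ k : ℕ, 2 ≤ k ∧ B (Δ i) (Δ j) = -Real.cos (Real.pi / (k : ℝ)))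
    (L : List ι) (h : ∀ i, 0 < l1 Δ (wd B Δ L (Δ i))) : wd B Δ L = 1 := by
  classical
  have hex : ∃ n, ∃ L', wd B Δ L' = wd B Δ L ∧ L'.length = n := ⟨_, L, rfl, rfl⟩
  obtain ⟨L1, hw, hl⟩ := Nat.find_spec hex
  have hmin : ∀ L', wd B Δ L' = wd B Δ L → L1.length ≤ L'.length := by
    intro L' h'
    rw [hl]
    exact Nat.find_min' hex ⟨L', h', rfl⟩
  rw [← hw] at h hmin ⊢
  clear hl hex hw
  rcases List.eq_nil_or_concat L1 with rfl | ⟨L0, t, rfl⟩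
  · exact wd_nil B Δ
  · exfalso
    rw [List.concat_eq_append] at *
    have hg : Good B Δ t L0 := by
      constructor
      · intro L' h'
        have := hmin (L' ++ [t]) (by rw [wd_append, wd_append, h'])
        simpa using this
      · intro L' h'
        have := hmin L' (by rw [wd_append, wd_cons, wd_nil, mul_one, h'])
        simp at this
        omega
    have hp := main_pos B Δ hsymm hdiag hoff _ L0 t rfl hg
    have ht := h t
    have e : wd B Δ (L0 ++ [t]) (Δ t) = - wd B Δ L0 (Δ t) := by
      rw [wd_append, wd_cons, wd_nil, mul_one, Module.End.mul_apply, rf_apply, hdiag, ← map_neg]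
      congr 1
      module
    rw [e, l1] at ht
    simp only [map_neg, Finsupp.neg_apply, Finset.sum_neg_distrib] at ht
    have := Finset.sum_nonneg (fun i (_ : i ∈ Finset.univ) => hp i)
    linarith

theorem cox_word (B : LinearMap.BilinForm ℝ V) (Δ : Module.Basis ι ℝ V)
    (hdiag : ∀ i : ι, B (Δ i) (Δ i) = 1) (w : V ≃ₗ[ℝ] V) (hw : w ∈ cox B Δ) :
    ∃ L, ∀ v, w v = wd B Δ L v := by
  unfold cox at hw
  induction hw using Subgroup.closure_induction with
  | mem e he =>
    obtain ⟨i, hi⟩ := he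
    refine ⟨[i], fun v => ?_⟩
    rw [hi, wd_cons, wd_nil, mul_one, rf_apply, hdiag, div_one]
  | one => exact ⟨[], fun v => by simp [wd_nil]⟩
  | mul x y _ _ hx hy =>
    obtain ⟨L, hL⟩ := hx
    obtain ⟨M, hM⟩ := hy
    exact ⟨L ++ M, fun v => by rw [wd_append, Module.End.mul_apply, LinearEquiv.mul_apply, hL, hM]⟩
  | inv x _ hx =>
    obtain ⟨L, hL⟩ := hx
    refine ⟨L.reverse, fun v => ?_⟩
    apply x.injective
    have h1 : x (x⁻¹ v) = v := by
      rw [← LinearEquiv.mul_apply, mul_inv_cancel]; rfl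
    rw [h1, hL, ← Module.End.mul_apply, wd_rev B Δ hdiag]; rfl

theorem root_refl (B : LinearMap.BilinForm ℝ V) (Δ : Module.Basis ι ℝ V)
    (hsymm : ∀ u v : V, B u v = B v u) (hdiag : ∀ i : ι, B (Δ i) (Δ i) = 1)
    (x : V) (hx : x ∈ Phi B Δ) : B x x = 1 ∧ ∃ L, rf B x = wd B Δ L := by
  obtain ⟨w, hw, i, rfl⟩ := hx
  obtain ⟨L, hL⟩ := cox_word B Δ hdiag w hw
  rw [hL]
  refine ⟨by rw [wd_iso B Δ hsymm hdiag, hdiag], L ++ i :: L.reverse, ?_⟩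
  rw [wd_append, wd_cons, ← mul_assoc, ← wd_conj B Δ hsymm hdiag, mul_assoc,
    wd_rev B Δ hdiag, mul_one]

theorem pair_eq (B : LinearMap.BilinForm ℝ V) (Δ : Module.Basis ι ℝ V)
    (hsymm : ∀ u v : V, B u v = B v u)
    (hdiag : ∀ i : ι, B (Δ i) (Δ i) = 1)
    (hoff : ∀ i j : ι, i ≠ j → B (Δ i) (Δ j) ≤ -1 ∨
      ∃ k : ℕ, 2 ≤ k ∧ B (Δ i) (Δ j) = -Real.cos (Real.pi / (k : ℝ)))
    (x y : V) (hx : x ∈ posPhi B Δ) (hy : y ∈ posPhi B Δ)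
    (h : ∀ i, 0 < l1 Δ (rf B x (rf B y (Δ i)))) : x = y := by
  obtain ⟨bx, L, hL⟩ := root_refl B Δ hsymm hdiag x hx.1
  obtain ⟨bY, M, hM⟩ := root_refl B Δ hsymm hdiag y hy.1
  have h1 : rf B x * rf B y = 1 := by
    rw [hL, hM, ← wd_append]
    apply discrete B Δ hsymm hdiag hoff
    intro i
    rw [wd_append, ← hL, ← hM]
    exact h i
  have h2 : rf B x y = - y := by
    have := congrArg (fun f => f y) h1
    simp only [Module.End.mul_apply, Module.End.one_apply] at this
    have e : rf B y y = - y := by rw [rf_apply, bY]; module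
    rw [e, map_neg] at this
    rw [← this, neg_neg, this]
  rw [rf_apply] at h2
  have h3 : y = B x y • x := by
    have : (2:ℝ) • y = (2 : ℝ) • (B x y • x) := by
      rw [smul_smul, two_smul]
      nth_rewrite 1 [← sub_add_cancel y ((2 * B x y) • x)]
      rw [h2]; abel
    exact smul_right_injective V (two_ne_zero (α := ℝ)) this
  set c := B x y with hc
  have h4 : c * c = 1 := by
    have := bY
    rw [h3] at this
    simpa [bx] using this
  rcases mul_self_eq_one_iff.mp h4 with h5 | h5
  · rw [h3, h5, one_smul]
  · exfalso
    rw [h5] at h3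
    have hx0 : x = 0 := by
      apply Δ.repr.injective
      ext i
      have a1 := hx.2 i
      have a2 := hy.2 i
      rw [h3] at a2
      simp at a2 ⊢
      linarith
    rw [hx0] at bx
    simp at bx

theorem finite_bdd (B : LinearMap.BilinForm ℝ V) (Δ : Module.Basis ι ℝ V)
    (hsymm : ∀ u v : V, B u v = B v u)
    (hdiag : ∀ i : ι, B (Δ i) (Δ i) = 1)
    (hoff : ∀ i j : ι, i ≠ j → B (Δ i) (Δ j) ≤ -1 ∨
      ∃ k : ℕ, 2 ≤ k ∧ B (Δ i) (Δ j) = -Real.cos (Real.pi / (k : ℝ)))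
    (K : Set V) (hK : IsCompact K) (S : Set V) (hSK : S ⊆ K) (hS : S ⊆ posPhi B Δ) :
    S.Finite := by
  haveI : FiniteDimensional ℝ V := Module.Basis.finiteDimensional_of_finite Δ
  by_contra hinf
  obtain ⟨z, hzK, hz⟩ := Set.Infinite.exists_accPt_of_subset_isCompact hinf hK hSK
  have hBc : Continuous (fun p : V × V => B p.1 p.2) := by
    have : (fun p : V × V => B p.1 p.2) =
        fun p : V × V => ∑ i, Δ.repr p.1 i * B (Δ i) p.2 := by
      ext p
      conv_lhs => rw [← Δ.sum_repr p.1]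
      simp only [map_sum, map_smul, LinearMap.sum_apply, LinearMap.smul_apply, smul_eq_mul]
    rw [this]
    refine continuous_finsetSum _ fun i _ => ?_
    have h1 : Continuous (Δ.coord i) := LinearMap.continuous_of_finiteDimensional _
    have h2 : Continuous (B (Δ i)) := LinearMap.continuous_of_finiteDimensional _
    exact (h1.comp continuous_fst).mul (h2.comp continuous_snd)
  have hB2 : ∀ f g : V × V → V, Continuous f → Continuous g →
      Continuous (fun p => B (f p) (g p)) := fun f g hf hg => hBc.comp (hf.prodMk hg)
  have hfreq := accPt_iff_frequently.mp hz
  have hzz : B z z = 1 := by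
    have hcl : IsClosed {v : V | B v v = 1} :=
      isClosed_eq (hBc.comp (continuous_id.prodMk continuous_id)) continuous_const
    have : z ∈ closure {v : V | B v v = 1} := by
      rw [mem_closure_iff_frequently]
      exact hfreq.mono fun y hy => (root_refl B Δ hsymm hdiag y (hS hy.2).1).1
    rwa [hcl.closure_eq] at this
  have hl1 : Continuous (l1 Δ) := by
    unfold l1
    refine continuous_finsetSum _ fun i _ => ?_
    exact (LinearMap.continuous_of_finiteDimensional (Δ.coord i) : _)
  have hev : ∀ᶠ p : V × V in 𝓝 (z, z), ∀ i, 0 < l1 Δ (rf B p.1 (rf B p.2 (Δ i))) := by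
    rw [eventually_all]
    intro i
    have hc : Continuous (fun p : V × V => l1 Δ (rf B p.1 (rf B p.2 (Δ i)))) := by
      apply hl1.comp
      have h2 : Continuous (fun p : V × V => rf B p.2 (Δ i)) := by
        simp only [rf_apply]
        exact continuous_const.sub ((continuous_const.mul
          (hB2 _ _ continuous_snd continuous_const)).smul continuous_snd)
      have : (fun p : V × V => rf B p.1 (rf B p.2 (Δ i))) = fun p : V × V =>
          rf B p.2 (Δ i) - (2 * B p.1 (rf B p.2 (Δ i))) • p.1 := by
        ext p; rw [rf_apply]
      rw [this]
      exact h2.sub ((continuous_const.mul (hB2 _ _ continuous_fst h2)).smul continuous_fst)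
    refine hc.continuousAt.eventually (lt_mem_nhds ?_)
    have : rf B z (rf B z (Δ i)) = Δ i := by
      rw [← Module.End.mul_apply, rf_sq B z hzz]; rfl
    simp only [this]
    classical
    simp [l1, Finsupp.single_apply]
  rw [nhds_prod_eq] at hev
  obtain ⟨T, hT, hTT⟩ :=
    (eventually_prod_self_iff (r := fun x y => ∀ i, 0 < l1 Δ (rf B x (rf B y (Δ i))))).mp hev
  obtain ⟨x, ⟨hxz, hxS⟩, hxT⟩ := (hfreq.and_eventually hT).exists
  have hT2 : ∀ᶠ y in 𝓝 z, y ∈ T := hT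
  have hne : ∀ᶠ y in 𝓝 z, y ≠ x := (isOpen_ne.mem_nhds hxz.symm)
  obtain ⟨y, ⟨hyz, hyS⟩, hyT, hyx⟩ := (hfreq.and_eventually (hT2.and hne)).exists
  exact hyx (pair_eq B Δ hsymm hdiag hoff y x (hS hyS) (hS hxS)
    (hTT y hyT x hxT))

theorem compact_sub (Δ : Module.Basis ι ℝ V)
    (N : Seminorm ℝ V) (hN : ∀ v : V, N v = 0 → v = 0) (C : ℝ) :
    IsCompact {v | N v ≤ C} := by
  haveI : FiniteDimensional ℝ V := Module.Basis.finiteDimensional_of_finite Δ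
  haveI : ProperSpace V := FiniteDimensional.proper_real V
  have hc : Continuous N := by
    exact continuousOn_univ.mp (N.convexOn.continuousOn isOpen_univ)
  refine Metric.isCompact_of_isClosed_isBounded (isClosed_le hc continuous_const) ?_
  obtain hE | hE := (Metric.sphere (0 : V) 1).eq_empty_or_nonempty
  · refine (Metric.isBounded_closedBall (x := (0:V)) (r := 0)).subset fun v _ => ?_
    by_contra hv
    have hv : v ≠ 0 := by rintro rfl; simp at hv
    have : (‖v‖⁻¹ • v) ∈ Metric.sphere (0:V) 1 := by
      simp [norm_smul, inv_mul_cancel₀ (norm_ne_zero_iff.mpr hv)]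
    rw [hE] at this
    exact this
  · obtain ⟨u, hu, hmin⟩ := (isCompact_sphere (0:V) 1).exists_isMinOn hE hc.continuousOn
    have hu0 : u ≠ 0 := by rintro rfl; simp at hu
    have hNu : 0 < N u := lt_of_le_of_ne (apply_nonneg N u) fun h => hu0 (hN u h.symm)
    refine (Metric.isBounded_closedBall (x := (0:V)) (r := C / N u)).subset fun v hv => ?_
    rw [mem_closedBall_zero_iff, le_div_iff₀ hNu]
    by_cases hv0 : v = 0
    · subst hv0
      have : N 0 ≤ C := hv
      simpa using this
    have hnv := norm_pos_iff.mpr hv0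
    have hs : (‖v‖⁻¹ • v) ∈ Metric.sphere (0:V) 1 := by
      simp [norm_smul, inv_mul_cancel₀ hnv.ne']
    have h1 : N u ≤ N (‖v‖⁻¹ • v) := hmin hs
    rw [map_smul_eq_mul, norm_inv, norm_norm] at h1
    have hv' : N v ≤ C := hv
    calc ‖v‖ * N u ≤ ‖v‖ * (‖v‖⁻¹ * N v) := by gcongr
      _ = N v := by field_simp
      _ ≤ C := hv'

end CoxAux

/-- For every injective sequence of positive roots, and every norm on `V`,
the sequence of norms of the roots tends to infinity. -/
theorem statement0 (B : LinearMap.BilinForm ℝ V) (Δ : Module.Basis ι ℝ V)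
    (hsymm : ∀ u v : V, B u v = B v u)
    (hdiag : ∀ i : ι, B (Δ i) (Δ i) = 1)
    (hoff : ∀ i j : ι, i ≠ j → B (Δ i) (Δ j) ≤ -1 ∨
      ∃ k : ℕ, 2 ≤ k ∧ B (Δ i) (Δ j) = -Real.cos (Real.pi / (k : ℝ)))
    (ρ : ℕ → V) (hρ : ∀ n : ℕ, ρ n ∈ posPhi B Δ) (hinj : Function.Injective ρ)
    (N : Seminorm ℝ V) (hN : ∀ v : V, N v = 0 → v = 0) :
    Tendsto (fun n : ℕ => N (ρ n)) atTop atTop := by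
  rw [← Nat.cofinite_eq_atTop, tendsto_atTop]
  intro C
  rw [eventually_cofinite]
  have hf := CoxAux.finite_bdd B Δ hsymm hdiag hoff _ (CoxAux.compact_sub Δ N hN C)
    (posPhi B Δ ∩ {v | N v ≤ C}) Set.inter_subset_right Set.inter_subset_left
  refine (hf.preimage (f := ρ) hinj.injOn).subset fun n hn => ⟨hρ n, ?_⟩
  exact (not_le.mp hn).le
end
end

section
/- Every accumulation point of the set Φ̂ of normalized roots lies in Q ∩ V₁; that is, E(Φ) ⊆ Q̂. In particular, if (ρ_n)_{n∈ℕ} is an injective sequence in Φ⁺ such that (ρ̂_n) converges to a limit ℓ, then B(ℓ,ℓ) = 0 and ℓ ∈ V₁. -/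
open Filter Topology

noncomputable section

variable {ι V : Type*} [Fintype ι] [NormedAddCommGroup V] [NormedSpace ℝ V]

section helpers

set_option linter.unusedSectionVars false

lemma one_app (u : V) : (1 : V ≃ₗ[ℝ] V) u = u := rfl

/-- products of simple reflections -/
def wd (s : ι → (V ≃ₗ[ℝ] V)) (l : List ι) : V ≃ₗ[ℝ] V := (l.map s).prod

/-- length -/
def len (s : ι → (V ≃ₗ[ℝ] V)) (g : V ≃ₗ[ℝ] V) : ℕ :=
  sInf {n | ∃ l : List ι, l.length = n ∧ wd s l = g}

/-- being a word -/
def IsW (s : ι → (V ≃ₗ[ℝ] V)) (g : V ≃ₗ[ℝ] V) : Prop := ∃ l : List ι, wd s l = g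

lemma len_le (s : ι → (V ≃ₗ[ℝ] V)) (l : List ι) : len s (wd s l) ≤ l.length :=
  Nat.sInf_le ⟨l, rfl, rfl⟩

lemma len_spec (s : ι → (V ≃ₗ[ℝ] V)) {g : V ≃ₗ[ℝ] V} (h : IsW s g) :
    ∃ l : List ι, l.length = len s g ∧ wd s l = g := by
  obtain ⟨l, hl⟩ := h
  exact Nat.sInf_mem (s := {n | ∃ l : List ι, l.length = n ∧ wd s l = g}) ⟨_, l, rfl, hl⟩

lemma wd_append (s : ι → (V ≃ₗ[ℝ] V)) (l m : List ι) : wd s (l ++ m) = wd s l * wd s m := by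
  simp [wd]

lemma isW_mul (s : ι → (V ≃ₗ[ℝ] V)) {g h : V ≃ₗ[ℝ] V} (hg : IsW s g) (hh : IsW s h) :
    IsW s (g * h) := by
  obtain ⟨l, rfl⟩ := hg
  obtain ⟨m, rfl⟩ := hh
  exact ⟨l ++ m, wd_append s l m⟩

lemma isW_s (s : ι → (V ≃ₗ[ℝ] V)) (i : ι) : IsW s (s i) := ⟨[i], by simp [wd]⟩

lemma isW_one (s : ι → (V ≃ₗ[ℝ] V)) : IsW s 1 := ⟨[], by simp [wd]⟩

lemma len_mul (s : ι → (V ≃ₗ[ℝ] V)) {g h : V ≃ₗ[ℝ] V} (hg : IsW s g) (hh : IsW s h) :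
    len s (g * h) ≤ len s g + len s h := by
  obtain ⟨l, hl, rfl⟩ := len_spec s hg
  obtain ⟨m, hm, rfl⟩ := len_spec s hh
  rw [← wd_append]
  refine (len_le s _).trans ?_
  simp [← hl, ← hm]

lemma len_s (s : ι → (V ≃ₗ[ℝ] V)) (i : ι) : len s (s i) ≤ 1 := by
  have := len_le s [i]
  simpa [wd] using this

lemma len_one (s : ι → (V ≃ₗ[ℝ] V)) : len s 1 = 0 := by
  have := len_le s []
  simpa [wd] using this

/-- alternating letters -/
def Lt (a b : ι) (n : ℕ) : ι := if Even n then b else a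

/-- alternating words ending in `b` -/
def alt (s : ι → (V ≃ₗ[ℝ] V)) (a b : ι) : ℕ → (V ≃ₗ[ℝ] V)
  | 0 => 1
  | n + 1 => s (Lt a b n) * alt s a b n

/-- Chebyshev-like coefficients -/
def chb (C : ℝ) : ℕ → ℝ
  | 0 => 0
  | 1 => 1
  | n + 2 => 2 * C * chb C (n + 1) - chb C n

lemma chb_mono {C : ℝ} (hC : 1 ≤ C) (n : ℕ) : 0 ≤ chb C n ∧ chb C n ≤ chb C (n + 1) := by
  induction n with
  | zero => simp [chb]
  | succ n ih =>
    obtain ⟨h1, h2⟩ := ih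
    refine ⟨h1.trans h2, ?_⟩
    show _ ≤ 2 * C * chb C (n + 1) - chb C n
    nlinarith [h1.trans h2]

lemma chb_sin (θ : ℝ) (n : ℕ) : chb (Real.cos θ) n * Real.sin θ = Real.sin (n * θ) ∧
    chb (Real.cos θ) (n + 1) * Real.sin θ = Real.sin ((n + 1 : ℕ) * θ) := by
  induction n with
  | zero => simp [chb]
  | succ n ih =>
    refine ⟨ih.2, ?_⟩
    show (2 * Real.cos θ * chb (Real.cos θ) (n + 1) - chb (Real.cos θ) n) * Real.sin θ = _
    have e1 : ((n : ℝ) * θ) = ((n + 1 : ℕ) : ℝ) * θ - θ := by push_cast; ring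
    have e2 : (((n + 1 + 1 : ℕ) : ℝ) * θ) = ((n + 1 : ℕ) : ℝ) * θ + θ := by push_cast; ring
    have h1 := ih.1
    have h2 := ih.2
    rw [e1, Real.sin_sub] at h1
    rw [e2, Real.sin_add]
    linear_combination 2 * Real.cos θ * h2 - h1

lemma sin_pos_k {k : ℕ} (hk : 2 ≤ k) : 0 < Real.sin (Real.pi / k) := by
  have hk' : (2 : ℝ) ≤ k := by exact_mod_cast hk
  apply Real.sin_pos_of_pos_of_lt_pi
  · exact div_pos Real.pi_pos (by linarith)
  · rw [div_lt_iff₀ (by linarith)]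
    nlinarith [Real.pi_pos]

lemma chb_nonneg {k : ℕ} (hk : 2 ≤ k) {n : ℕ} (hn : n ≤ k) :
    0 ≤ chb (Real.cos (Real.pi / k)) n := by
  have hs := sin_pos_k hk
  have hk' : (2 : ℝ) ≤ k := by exact_mod_cast hk
  have hn' : (n : ℝ) ≤ k := by exact_mod_cast hn
  have h := (chb_sin (Real.pi / k) n).1
  have h2 : 0 ≤ Real.sin (n * (Real.pi / k)) := by
    apply Real.sin_nonneg_of_nonneg_of_le_pi
    · have := Real.pi_pos
      positivity
    · rw [mul_div_assoc', div_le_iff₀ (by linarith)]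
      nlinarith [Real.pi_pos]
  rw [← h] at h2
  exact nonneg_of_mul_nonneg_left h2 hs

lemma chb_k {k : ℕ} (hk : 1 ≤ k) (hk2 : 2 ≤ k + 1) :
    chb (Real.cos (Real.pi / (k + 1 : ℕ))) (k + 1) = 0 ∧
    chb (Real.cos (Real.pi / (k + 1 : ℕ))) k = 1 := by
  have hs := sin_pos_k hk2
  obtain ⟨h1, h2⟩ := chb_sin (Real.pi / (k + 1 : ℕ)) k
  have hne : ((k + 1 : ℕ) : ℝ) ≠ 0 := by positivity
  have e1 : ((k + 1 : ℕ) : ℝ) * (Real.pi / (k + 1 : ℕ)) = Real.pi := by field_simp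
  have e2 : (k : ℝ) * (Real.pi / (k + 1 : ℕ)) = Real.pi - Real.pi / (k + 1 : ℕ) := by
    push_cast at *; field_simp; ring
  rw [e1, Real.sin_pi] at h2
  rw [e2, Real.sin_pi_sub] at h1
  refine ⟨?_, ?_⟩
  · rcases mul_eq_zero.1 h2 with h | h
    · exact h
    · exact absurd h hs.ne'
  · exact mul_right_cancel₀ hs.ne' (by rw [h1, one_mul])

/-- hypotheses bundle -/
structure Hyp (B : LinearMap.BilinForm ℝ V) (Δ : Module.Basis ι ℝ V)
    (s : ι → (V ≃ₗ[ℝ] V)) : Prop where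
  symm : ∀ u v : V, B u v = B v u
  diag : ∀ i : ι, B (Δ i) (Δ i) = 1
  off : ∀ i j : ι, i ≠ j → B (Δ i) (Δ j) ≤ -1 ∨
      ∃ k : ℕ, 2 ≤ k ∧ B (Δ i) (Δ j) = -Real.cos (Real.pi / (k : ℝ))
  refl : ∀ i u, s i u = u - (2 * B (Δ i) u) • Δ i

variable {B : LinearMap.BilinForm ℝ V} {Δ : Module.Basis ι ℝ V} {s : ι → (V ≃ₗ[ℝ] V)}

lemma s_root (H : Hyp B Δ s) (i : ι) : s i (Δ i) = - Δ i := by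
  rw [H.refl, H.diag, mul_one, two_smul]; abel

lemma s_sq (H : Hyp B Δ s) (i : ι) : s i * s i = 1 := by
  ext u
  simp only [LinearEquiv.mul_apply, one_app]
  rw [H.refl i u, map_sub, map_smul, s_root H, H.refl i u]
  module

lemma s_isom (H : Hyp B Δ s) (i : ι) (u v : V) : B (s i u) (s i v) = B u v := by
  rw [H.refl, H.refl]
  simp only [map_sub, map_smul, LinearMap.sub_apply, LinearMap.smul_apply, smul_eq_mul, H.diag]
  rw [H.symm u (Δ i)]
  ring

lemma W_isom (H : Hyp B Δ s) {g : V ≃ₗ[ℝ] V} (hg : IsW s g) (u v : V) :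
    B (g u) (g v) = B u v := by
  obtain ⟨l, rfl⟩ := hg
  induction l with
  | nil => simp [wd]
  | cons i l ih =>
    have : wd s (i :: l) = s i * wd s l := by simp [wd]
    rw [this, LinearEquiv.mul_apply, LinearEquiv.mul_apply, s_isom H, ih]

lemma alt_isW (s : ι → (V ≃ₗ[ℝ] V)) (a b : ι) (n : ℕ) :
    IsW s (alt s a b n) ∧ len s (alt s a b n) ≤ n := by
  induction n with
  | zero => exact ⟨isW_one s, (len_one s).le⟩
  | succ n ih =>
    refine ⟨isW_mul s (isW_s s _) ih.1, ?_⟩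
    have := len_mul s (isW_s s (Lt a b n)) ih.1
    have h1 := len_s s (Lt a b n)
    show len s (s (Lt a b n) * alt s a b n) ≤ _
    omega

lemma Lt_add_two (a b : ι) (n : ℕ) : Lt a b (n + 2) = Lt a b n := by
  simp [Lt, Nat.even_add]

lemma B_Lt (H : Hyp B Δ s) (a b : ι) (n : ℕ) :
    B (Δ (Lt a b n)) (Δ (Lt a b (n + 1))) = B (Δ a) (Δ b) := by
  by_cases h : Even n
  · simp [Lt, Nat.even_add_one, h, H.symm]
  · simp [Lt, Nat.even_add_one, h]

lemma alt_root (H : Hyp B Δ s) (a b : ι) (n : ℕ) :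
    alt s a b n (Δ a) = chb (- B (Δ a) (Δ b)) (n + 1) • Δ (Lt a b (n + 1))
      + chb (- B (Δ a) (Δ b)) n • Δ (Lt a b n) := by
  induction n with
  | zero => simp [alt, chb, Lt]
  | succ n ih =>
    show s (Lt a b n) (alt s a b n (Δ a)) = _
    rw [ih, map_add, map_smul, map_smul, s_root H, H.refl, B_Lt H, Lt_add_two]
    show _ = (2 * (- B (Δ a) (Δ b)) * chb (- B (Δ a) (Δ b)) (n + 1) - chb (- B (Δ a) (Δ b)) n) • _ + _
    module

lemma conj_refl (H : Hyp B Δ s) {g : V ≃ₗ[ℝ] V} (hg : IsW s g) (i : ι) (u : V) :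
    (g * s i) u = g u - (2 * B (g (Δ i)) (g u)) • g (Δ i) := by
  rw [LinearEquiv.mul_apply, H.refl, map_sub, map_smul, W_isom H hg]

lemma braid (H : Hyp B Δ s) (a b : ι) {k : ℕ} (hk : 2 ≤ k)
    (hB : B (Δ a) (Δ b) = -Real.cos (Real.pi / (k : ℝ))) :
    alt s a b k * s a = alt s a b (k - 1) := by
  obtain ⟨k, rfl⟩ : ∃ m, k = m + 1 := ⟨k - 1, by omega⟩
  have hc := chb_k (k := k) (by omega) hk
  have hr := alt_root H a b k
  rw [hB, neg_neg, hc.1, hc.2, zero_smul, one_smul, zero_add] at hr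
  have hgs : alt s a b k * s a = s (Lt a b k) * alt s a b k := by
    ext u
    rw [conj_refl H (alt_isW s a b k).1, hr, LinearEquiv.mul_apply, H.refl]
  show s (Lt a b k) * alt s a b k * s a = alt s a b k
  rw [mul_assoc, hgs, ← mul_assoc, s_sq H, one_mul]

lemma braid_len (H : Hyp B Δ s) (a b : ι) {k : ℕ} (hk : 2 ≤ k)
    (hB : B (Δ a) (Δ b) = -Real.cos (Real.pi / (k : ℝ))) (n : ℕ) (hn : k ≤ n) :
    len s (alt s a b n * s a) ≤ n - 1 := by
  induction n, hn using Nat.le_induction with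
  | base => rw [braid H a b hk hB]; exact (alt_isW s a b _).2
  | succ n hn ih =>
    show len s (s (Lt a b n) * alt s a b n * s a) ≤ _
    rw [mul_assoc]
    have := len_mul s (isW_s s (Lt a b n)) (isW_mul s (alt_isW s a b n).1 (isW_s s a))
    have h1 := len_s s (Lt a b n)
    omega

lemma key (H : Hyp B Δ s) (N : ℕ) : ∀ (w : V ≃ₗ[ℝ] V), IsW s w → len s w = N → ∀ a : ι,
    len s w ≤ len s (w * s a) → ∀ i, 0 ≤ Δ.repr (w (Δ a)) i := by
  classical
  induction N using Nat.strong_induction_on with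
  | _ N IH =>
  intro w hw hN a ha
  obtain ⟨l, hl, hlw⟩ := len_spec s hw
  rcases List.eq_nil_or_concat l with rfl | ⟨l', b, rfl⟩
  · have : w = 1 := by rw [← hlw]; simp [wd]
    subst this
    intro i
    simp only [one_app, Module.Basis.repr_self, Finsupp.single_apply]
    split_ifs <;> norm_num
  have hw' : w = wd s l' * s b := by rw [← hlw]; simp [wd]
  have hl'len : l'.length + 1 = len s w := by simpa using hl
  have hab : a ≠ b := by
    rintro rfl
    have : w * s a = wd s l' := by rw [hw', mul_assoc, s_sq H, mul_one]
    rw [this] at ha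
    have := len_le s l'
    omega
  let P : ℕ → Prop := fun n => ∃ v, IsW s v ∧ w = v * alt s a b n ∧ len s v + n = len s w
  have hPbd : ∀ n, P n → n ≤ len s w := by
    rintro n ⟨v, -, -, h⟩; omega
  have hP1 : P 1 := by
    refine ⟨wd s l', ⟨l', rfl⟩, ?_, ?_⟩
    · rw [hw']; simp [alt, Lt]
    · have h1 := len_le s l'
      have h2 := len_mul s ⟨l', rfl⟩ (isW_s s b)
      rw [← hw'] at h2
      have := len_s s b
      omega
  obtain ⟨n, hn1, hPn, hmax⟩ : ∃ n, 1 ≤ n ∧ P n ∧ ¬ P (n + 1) := by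
    refine ⟨Nat.findGreatest P (len s w), Nat.le_findGreatest (hPbd 1 hP1) hP1,
      Nat.findGreatest_spec (hPbd 1 hP1) hP1, fun h => ?_⟩
    have := Nat.le_findGreatest (hPbd _ h) h
    omega
  obtain ⟨v, hv, hwv, hlen⟩ := hPn
  have hnext : len s v ≤ len s (v * s (Lt a b n)) := by
    by_contra hlt
    apply hmax
    refine ⟨v * s (Lt a b n), isW_mul s hv (isW_s s _), ?_, ?_⟩
    · show w = v * s (Lt a b n) * (s (Lt a b n) * alt s a b n)
      rw [mul_assoc, ← mul_assoc (s (Lt a b n)), s_sq H, one_mul, hwv]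
    · have h2 := len_mul s (isW_mul s hv (isW_s s (Lt a b n))) (alt_isW s a b (n + 1)).1
      have h3 : v * s (Lt a b n) * alt s a b (n + 1) = w := by
        show v * s (Lt a b n) * (s (Lt a b n) * alt s a b n) = w
        rw [mul_assoc, ← mul_assoc (s (Lt a b n)), s_sq H, one_mul, hwv]
      rw [h3] at h2
      have := (alt_isW s a b (n + 1)).2
      omega
  have hfront : len s v ≤ len s (v * s (Lt a b (n + 1))) := by
    obtain ⟨m, rfl⟩ : ∃ m, n = m + 1 := ⟨n - 1, by omega⟩
    by_contra hlt
    have h3 : w = v * s (Lt a b (m + 1 + 1)) * alt s a b m := by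
      rw [hwv, Lt_add_two]
      show v * (s (Lt a b m) * alt s a b m) = _
      rw [mul_assoc]
    have h2 := len_mul s (isW_mul s hv (isW_s s (Lt a b (m + 1 + 1)))) (alt_isW s a b m).1
    rw [← h3] at h2
    have := (alt_isW s a b m).2
    omega
  have p1 := IH (len s v) (by omega) v hv rfl _ hnext
  have p2 := IH (len s v) (by omega) v hv rfl _ hfront
  have hcoef : 0 ≤ chb (- B (Δ a) (Δ b)) n ∧ 0 ≤ chb (- B (Δ a) (Δ b)) (n + 1) := by
    rcases H.off a b hab with h | ⟨k, hk, hB⟩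
    · exact ⟨(chb_mono (by linarith) n).1, (chb_mono (by linarith) (n + 1)).1⟩
    · have hnk : n < k := by
        by_contra hge
        have h1 := braid_len H a b hk hB n (by omega)
        have h2 := len_mul s hv (isW_mul s (alt_isW s a b n).1 (isW_s s a))
        rw [← mul_assoc, ← hwv] at h2
        omega
      rw [hB, neg_neg]
      exact ⟨chb_nonneg hk hnk.le, chb_nonneg hk hnk⟩
  intro i
  rw [hwv, LinearEquiv.mul_apply, alt_root H]
  simp only [map_add, map_smul, Finsupp.add_apply, Finsupp.smul_apply, smul_eq_mul]
  exact add_nonneg (mul_nonneg hcoef.2 (p2 i)) (mul_nonneg hcoef.1 (p1 i))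

lemma eq_one (H : Hyp B Δ s) {w : V ≃ₗ[ℝ] V} (hw : IsW s w) (h : ∀ i, 0 < l1 Δ (w (Δ i))) :
    w = 1 := by
  obtain ⟨l, hl, hlw⟩ := len_spec s hw
  rcases List.eq_nil_or_concat l with rfl | ⟨l', b, rfl⟩
  · rw [← hlw]; simp [wd]
  exfalso
  have hw' : w = wd s l' * s b := by rw [← hlw]; simp [wd]
  have hl'len : l'.length + 1 = len s w := by simpa using hl
  have h1 := len_le s l'
  have := key H _ (wd s l') ⟨l', rfl⟩ rfl b (by rw [← hw']; omega)
  have hb := h b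
  rw [hw', LinearEquiv.mul_apply, s_root H, map_neg, l1] at hb
  simp only [map_neg, Finsupp.neg_apply, Finset.sum_neg_distrib] at hb
  have := Finset.sum_nonneg (s := Finset.univ) (fun i _ => this i)
  linarith

lemma exists_s (hdiag : ∀ i : ι, B (Δ i) (Δ i) = 1) :
    ∃ s : ι → (V ≃ₗ[ℝ] V), ∀ i u, s i u = u - (2 * B (Δ i) u) • Δ i := by
  have h : ∀ i, ((2 : ℝ) • B (Δ i)) (Δ i) = 2 := by intro i; simp [hdiag]
  exact ⟨fun i => Module.reflection (h i), fun i u => by simp [Module.reflection_apply]⟩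

lemma isW_inv (H : Hyp B Δ s) {g : V ≃ₗ[ℝ] V} (hg : IsW s g) : IsW s g⁻¹ := by
  obtain ⟨l, rfl⟩ := hg
  induction l with
  | nil => exact ⟨[], by simp [wd]⟩
  | cons i l ih =>
    have : wd s (i :: l) = s i * wd s l := by simp [wd]
    rw [this, mul_inv_rev, inv_eq_of_mul_eq_one_right (s_sq H i)]
    exact isW_mul s ih (isW_s s i)

lemma cox_isW (H : Hyp B Δ s) {g : V ≃ₗ[ℝ] V} (hg : g ∈ cox B Δ) : IsW s g := by
  induction hg using Subgroup.closure_induction with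
  | mem x hx =>
    obtain ⟨i, hi⟩ := hx
    have : x = s i := by
      ext u
      rw [hi, H.refl, H.diag, div_one]
    rw [this]; exact isW_s s i
  | one => exact isW_one s
  | mul x y _ _ hx hy => exact isW_mul s hx hy
  | inv x _ hx => exact isW_inv H hx

lemma root_refl (H : Hyp B Δ s) {ρ : V} (hρ : ρ ∈ Phi B Δ) :
    B ρ ρ = 1 ∧ ∃ g, IsW s g ∧ ∀ u, g u = u - (2 * B ρ u) • ρ := by
  obtain ⟨w, hw, i, rfl⟩ := hρ
  have hW := cox_isW H hw
  refine ⟨by rw [W_isom H hW, H.diag], w * s i * w⁻¹,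
    isW_mul s (isW_mul s hW (isW_s s i)) (isW_inv H hW), fun u => ?_⟩
  have : w (w⁻¹ u) = u := by
    rw [← LinearEquiv.mul_apply, mul_inv_cancel, one_app]
  rw [LinearEquiv.mul_apply, conj_refl H hW, this]

lemma cont_l1 : Continuous (l1 Δ) := by
  have : FiniteDimensional ℝ V := Δ.finiteDimensional_of_finite
  unfold l1
  refine continuous_finsetSum _ fun i _ => ?_
  exact LinearMap.continuous_of_finiteDimensional (Δ.coord i)

lemma cont_B (B : LinearMap.BilinForm ℝ V) (Δ : Module.Basis ι ℝ V) :
    Continuous (fun p : V × V => B p.1 p.2) := by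
  have : FiniteDimensional ℝ V := Δ.finiteDimensional_of_finite
  have h : (fun p : V × V => B p.1 p.2) = fun p => ∑ i, Δ.coord i p.1 * B (Δ i) p.2 := by
    funext p
    conv_lhs => rw [← Δ.sum_repr p.1]
    simp only [map_sum, map_smul, LinearMap.sum_apply, LinearMap.smul_apply, smul_eq_mul,
      Module.Basis.coord_apply]
  rw [h]
  refine continuous_finsetSum _ fun i _ => ?_
  have h1 := LinearMap.continuous_of_finiteDimensional (Δ.coord i)
  have h2 := LinearMap.continuous_of_finiteDimensional (B (Δ i))
  exact (h1.comp continuous_fst).mul (h2.comp continuous_snd)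

lemma fin_roots (H : Hyp B Δ s) (M : ℝ) : {ρ ∈ posPhi B Δ | l1 Δ ρ ≤ M}.Finite := by
  have : FiniteDimensional ℝ V := Δ.finiteDimensional_of_finite
  by_contra hinf
  have hK : IsCompact (Δ.equivFun.symm '' (Set.univ.pi fun _ : ι => Set.Icc (0 : ℝ) M)) :=
    (isCompact_univ_pi fun _ => isCompact_Icc).image
      (LinearMap.continuous_of_finiteDimensional (Δ.equivFun.symm : (ι → ℝ) →ₗ[ℝ] V))
  obtain ⟨x, -, hx⟩ := Set.Infinite.exists_accPt_of_subset_isCompact hinf hK (by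
    rintro ρ ⟨⟨-, hpos⟩, hM⟩
    refine ⟨Δ.equivFun ρ, ?_, by simp⟩
    intro i _
    simp only [Module.Basis.equivFun_apply]
    refine ⟨hpos i, le_trans ?_ hM⟩
    exact Finset.single_le_sum (f := fun i => Δ.repr ρ i) (fun i _ => hpos i) (Finset.mem_univ i))
  have hBd : Continuous fun v : V => B v v :=
    (cont_B B Δ).comp (continuous_id.prodMk continuous_id)
  have hxB : B x x = 1 := by
    have hc : IsClosed {v : V | B v v = 1} := isClosed_eq hBd continuous_const
    have hsub : {ρ ∈ posPhi B Δ | l1 Δ ρ ≤ M} ⊆ {v : V | B v v = 1} :=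
      fun ρ hρ => (root_refl H hρ.1.1).1
    exact hc.closure_subset_iff.2 hsub (hx.clusterPt.mem_closure)
  let F : ι → V × V → ℝ := fun i p =>
    l1 Δ ((Δ i - (2 * B p.2 (Δ i)) • p.2) - (2 * B p.1 (Δ i - (2 * B p.2 (Δ i)) • p.2)) • p.1)
  have hF : ∀ i, Continuous (F i) := by
    intro i
    have hb := cont_B B Δ
    have h2 : Continuous fun p : V × V => B p.2 (Δ i) :=
      hb.comp (continuous_snd.prodMk continuous_const)
    have h3 : Continuous fun p : V × V => Δ i - (2 * B p.2 (Δ i)) • p.2 :=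
      continuous_const.sub ((continuous_const.mul h2).smul continuous_snd)
    have h4 : Continuous fun p : V × V => B p.1 (Δ i - (2 * B p.2 (Δ i)) • p.2) :=
      hb.comp (continuous_fst.prodMk h3)
    exact cont_l1.comp (h3.sub ((continuous_const.mul h4).smul continuous_fst))
  have hev : ∀ᶠ p in 𝓝 (x, x), ∀ i, 0 < F i p := by
    rw [eventually_all]
    intro i
    refine (hF i).continuousAt.eventually (lt_mem_nhds ?_)
    have : (Δ i - (2 * B x (Δ i)) • x) - (2 * B x (Δ i - (2 * B x (Δ i)) • x)) • x = Δ i := by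
      rw [map_sub, map_smul, hxB, smul_eq_mul]
      module
    show 0 < l1 Δ _
    simp only [this]
    classical
    simp [l1, Finsupp.single_apply]
  rw [nhds_prod_eq] at hev
  obtain ⟨U, hU, hUF⟩ := (Filter.HasBasis.prod_self (𝓝 x).basis_sets).eventually_iff.1 hev
  have huniq : ∀ ρ ∈ posPhi B Δ, ∀ σ ∈ posPhi B Δ, ρ ∈ U → σ ∈ U → ρ = σ := by
    intro ρ hρ σ hσ hρU hσU
    obtain ⟨hρ1, g, hg, hgu⟩ := root_refl H hρ.1
    obtain ⟨hσ1, h, hh, hhu⟩ := root_refl H hσ.1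
    have h1 : g * h = 1 := by
      apply eq_one H (isW_mul s hg hh)
      intro i
      have := hUF (show (ρ, σ) ∈ _ from ⟨hρU, hσU⟩) i
      rw [LinearEquiv.mul_apply, hgu, hhu]
      exact this
    have h2 : g (h σ) = σ := by rw [← LinearEquiv.mul_apply, h1, one_app]
    have h3 : h σ = - σ := by rw [hhu, hσ1, mul_one, two_smul]; abel
    rw [h3, map_neg, hgu] at h2
    have h4 : σ = (B ρ σ) • ρ := by
      have : (2 : ℝ) • σ = (2 : ℝ) • ((B ρ σ) • ρ) := by
        rw [two_smul]; nth_rewrite 1 [← h2]; module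
      exact smul_right_injective V (two_ne_zero) this
    generalize B ρ σ = c at h4
    have hc : c * c = 1 := by
      rw [h4] at hσ1
      simpa [hρ1] using hσ1
    rcases mul_self_eq_one_iff.1 hc with hc | hc
    · rw [h4, hc, one_smul]
    · exfalso
      have hz : ρ = 0 := by
        apply Δ.ext_elem
        intro i
        have a1 := hρ.2 i
        have a2 := hσ.2 i
        rw [h4, hc] at a2
        simp only [map_smul, Finsupp.smul_apply, smul_eq_mul, map_zero, Finsupp.zero_apply] at a2 ⊢
        linarith
      rw [hz] at hρ1
      simp at hρ1
  obtain ⟨y, ⟨hyU, hyS⟩, hyx⟩ := accPt_iff_nhds.1 hx U hU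
  have hU2 : U ∩ {y}ᶜ ∈ 𝓝 x := inter_mem hU (isOpen_compl_singleton.mem_nhds (Ne.symm hyx))
  obtain ⟨z, ⟨⟨hzU, hzy⟩, hzS⟩, hzx⟩ := accPt_iff_nhds.1 hx _ hU2
  exact hzy (huniq z hzS.1 y hyS.1 hzU hyU)

end helpers

/-- Every accumulation point of the set of normalized roots lies in `Q ∩ V₁`, i.e.
`E(Φ) ⊆ Q̂`.  In particular, if `(ρ n)` is an injective sequence of positive roots whose
normalizations converge to `ℓ`, then `B ℓ ℓ = 0` and `ℓ ∈ V₁`. -/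
theorem statement1 (B : LinearMap.BilinForm ℝ V) (Δ : Module.Basis ι ℝ V)
    (hsymm : ∀ u v : V, B u v = B v u)
    (hdiag : ∀ i : ι, B (Δ i) (Δ i) = 1)
    (hoff : ∀ i j : ι, i ≠ j → B (Δ i) (Δ j) ≤ -1 ∨
      ∃ k : ℕ, 2 ≤ k ∧ B (Δ i) (Δ j) = -Real.cos (Real.pi / (k : ℝ))) :
    Eset B Δ ⊆ isoQ B ∩ { v : V | l1 Δ v = 1 } ∧
    ∀ ρ : ℕ → V, (∀ n : ℕ, ρ n ∈ posPhi B Δ) → Function.Injective ρ →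
      ∀ ℓ : V, Tendsto (fun n : ℕ => nrm Δ (ρ n)) atTop (𝓝 ℓ) →
        B ℓ ℓ = 0 ∧ l1 Δ ℓ = 1 := by
  obtain ⟨s, hs⟩ := exists_s (B := B) (Δ := Δ) hdiag
  have H : Hyp B Δ s := ⟨hsymm, hdiag, hoff, hs⟩
  have hBd : Continuous fun v : V => B v v :=
    (cont_B B Δ).comp (continuous_id.prodMk continuous_id)
  let C : ℝ → Set V := fun M => {v | 0 ≤ B v v ∧ B v v ≤ 1 / M ∧ l1 Δ v = 1}
  have hC : ∀ M, IsClosed (C M) := fun M =>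
    (isClosed_le continuous_const hBd).inter
      ((isClosed_le hBd continuous_const).inter (isClosed_eq cont_l1 continuous_const))
  have hmem : ∀ M, 1 ≤ M → ∀ ρ ∈ posPhi B Δ, ¬ l1 Δ ρ ≤ M → nrm Δ ρ ∈ C M := by
    intro M hM ρ hρ hl
    push Not at hl
    have hl0 : 0 < l1 Δ ρ := by linarith
    have h1 := (root_refl H hρ.1).1
    have h2 : B (nrm Δ ρ) (nrm Δ ρ) = (l1 Δ ρ)⁻¹ * (l1 Δ ρ)⁻¹ := by
      simp [nrm, h1]
    refine ⟨by rw [h2]; positivity, ?_, ?_⟩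
    · rw [h2, ← mul_inv, one_div]
      apply inv_anti₀ (by linarith)
      nlinarith
    · have : l1 Δ (nrm Δ ρ) = (l1 Δ ρ)⁻¹ * l1 Δ ρ := by
        simp [nrm, l1, Finset.mul_sum]
      rw [this, inv_mul_cancel₀ hl0.ne']
  have hfinal : ∀ x, (∀ M, 1 ≤ M → x ∈ C M) → B x x = 0 ∧ l1 Δ x = 1 := by
    intro x hx
    refine ⟨le_antisymm ?_ (hx 1 le_rfl).1, (hx 1 le_rfl).2.2⟩
    by_contra hpos
    push Not at hpos
    have h := (hx (1 + 1 / B x x) (by have : 0 < 1 / B x x := by positivity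
                                      linarith)).2.1
    rw [le_div_iff₀ (by positivity)] at h
    have : B x x * (1 + 1 / B x x) = B x x + 1 := by field_simp
    linarith
  constructor
  · intro x hx
    apply hfinal
    intro M hM
    have hfin := (fin_roots H M).image (nrm Δ)
    have hsub : nPhi B Δ ⊆ (nrm Δ '' {ρ ∈ posPhi B Δ | l1 Δ ρ ≤ M}) ∪ C M := by
      rintro _ ⟨ρ, hρ, rfl⟩
      by_cases h : l1 Δ ρ ≤ M
      · exact Or.inl ⟨ρ, ⟨hρ, h⟩, rfl⟩
      · exact Or.inr (hmem M hM ρ hρ h)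
    have hx' : AccPt x (𝓟 (nPhi B Δ)) := hx
    by_contra hxC
    have hU : ((nrm Δ '' {ρ ∈ posPhi B Δ | l1 Δ ρ ≤ M}) \ {x})ᶜ ∩ (C M)ᶜ ∈ 𝓝 x :=
      inter_mem ((hfin.subset Set.sdiff_subset).isClosed.isOpen_compl.mem_nhds (by simp))
        ((hC M).isOpen_compl.mem_nhds hxC)
    obtain ⟨y, ⟨⟨hy1, hy2⟩, hyP⟩, hyx⟩ := accPt_iff_nhds.1 hx' _ hU
    rcases hsub hyP with h | h
    · exact hy1 ⟨h, hyx⟩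
    · exact hy2 h
  · intro ρ hρ hinj ℓ hℓ
    apply hfinal
    intro M hM
    refine (hC M).mem_of_tendsto hℓ ?_
    have hf : {n | l1 Δ (ρ n) ≤ M}.Finite := by
      refine ((fin_roots H M).preimage hinj.injOn).subset ?_
      intro n hn
      exact ⟨hρ n, hn⟩
    rw [← Nat.cofinite_eq_atTop]
    filter_upwards [hf.compl_mem_cofinite] with n hn
    exact hmem M hM _ (hρ n) hn
end
end

section
/- The root system Φ is a discrete subset of V: no point of Φ is an accumulation point of Φ. -/
open Filter Topology

noncomputable section

variable {ι V : Type*} [Fintype ι] [NormedAddCommGroup V] [NormedSpace ℝ V]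

/-- Chebyshev-like sequence. -/
def chU (c : ℝ) : ℕ → ℝ
  | 0 => 0
  | 1 => 1
  | (k + 2) => 2 * c * chU c (k + 1) - chU c k

lemma chU_cos (θ : ℝ) (k : ℕ) : chU (Real.cos θ) k * Real.sin θ = Real.sin (k * θ) := by
  have key : ∀ k : ℕ, chU (Real.cos θ) k * Real.sin θ = Real.sin (k * θ) ∧
      chU (Real.cos θ) (k + 1) * Real.sin θ = Real.sin ((k + 1 : ℕ) * θ) := by
    intro k
    induction k with
    | zero => simp [chU]
    | succ k ih =>
      refine ⟨ih.2, ?_⟩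
      have e1 : ((k + 1 + 1 : ℕ) : ℝ) * θ = ((k + 1 : ℕ) : ℝ) * θ + θ := by push_cast; ring
      have e2 : (k : ℝ) * θ = ((k + 1 : ℕ) : ℝ) * θ - θ := by push_cast; ring
      rw [e1, Real.sin_add, chU, sub_mul, ih.1, e2, Real.sin_sub, mul_assoc, ih.2]
      ring
  exact (key k).1

lemma chU_nonneg_of_one_le (c : ℝ) (hc : 1 ≤ c) (k : ℕ) : 0 ≤ chU c k := by
  have key : ∀ k : ℕ, 0 ≤ chU c k ∧ chU c k ≤ chU c (k + 1) := by
    intro k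
    induction k with
    | zero => simp [chU]
    | succ k ih =>
      refine ⟨ih.1.trans ih.2, ?_⟩
      rw [chU]
      nlinarith [ih.1, ih.2]
  exact (key k).1

lemma sin_pi_div_pos {m : ℕ} (hm : 2 ≤ m) : 0 < Real.sin (Real.pi / m) := by
  have hm' : (2 : ℝ) ≤ m := by exact_mod_cast hm
  apply Real.sin_pos_of_pos_of_lt_pi
  · have := Real.pi_pos
    positivity
  · rw [div_lt_iff₀ (by linarith)]
    nlinarith [Real.pi_pos]

lemma chU_nonneg_cos {m : ℕ} (hm : 2 ≤ m) {k : ℕ} (hk : k ≤ m) :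
    0 ≤ chU (Real.cos (Real.pi / m)) k := by
  have hs := sin_pi_div_pos hm
  have h := chU_cos (Real.pi / m) k
  have hm' : (2 : ℝ) ≤ m := by exact_mod_cast hm
  have hk' : (k : ℝ) ≤ m := by exact_mod_cast hk
  have : 0 ≤ Real.sin (k * (Real.pi / m)) := by
    apply Real.sin_nonneg_of_nonneg_of_le_pi
    · have := Real.pi_pos
      positivity
    · rw [← mul_div_assoc, div_le_iff₀ (by linarith)]
      nlinarith [Real.pi_pos]
  rw [← h] at this
  exact nonneg_of_mul_nonneg_left this hs

section cox
variable (B : LinearMap.BilinForm ℝ V) (Δ : Module.Basis ι ℝ V)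

/-- simple reflection -/
def sref (hdiag : ∀ i : ι, B (Δ i) (Δ i) = 1) (i : ι) : V ≃ₗ[ℝ] V :=
  Module.reflection (x := Δ i) (f := (2 : ℝ) • B (Δ i)) (by simp [hdiag])

variable (hsymm : ∀ u v : V, B u v = B v u)
    (hdiag : ∀ i : ι, B (Δ i) (Δ i) = 1)
    (hoff : ∀ i j : ι, i ≠ j → B (Δ i) (Δ j) ≤ -1 ∨
      ∃ k : ℕ, 2 ≤ k ∧ B (Δ i) (Δ j) = -Real.cos (Real.pi / (k : ℝ)))

lemma sref_apply (i : ι) (u : V) : sref B Δ hdiag i u = u - (2 * B (Δ i) u) • Δ i := by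
  simp [sref, Module.reflection_apply]

lemma sref_self (i : ι) : sref B Δ hdiag i (Δ i) = - Δ i := by
  rw [sref_apply, hdiag]; module

lemma sref_mul_self (i : ι) : sref B Δ hdiag i * sref B Δ hdiag i = 1 := by
  ext u
  simp only [LinearEquiv.mul_apply, sref_apply, map_sub, map_smul, smul_eq_mul, hdiag,
    LinearEquiv.coe_one, id]
  module

include hsymm in
lemma sref_alt (i j : ι) (k : ℕ) :
    ((CoxeterSystem.alternatingWord i j k).map (sref B Δ hdiag)).prod (Δ i) =
      if Even k then chU (-B (Δ i) (Δ j)) (k + 1) • Δ i + chU (-B (Δ i) (Δ j)) k • Δ j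
      else chU (-B (Δ i) (Δ j)) k • Δ i + chU (-B (Δ i) (Δ j)) (k + 1) • Δ j := by
  induction k with
  | zero => simp [CoxeterSystem.alternatingWord, chU]
  | succ k ih =>
    rw [CoxeterSystem.alternatingWord_succ', List.map_cons, List.prod_cons,
      LinearEquiv.mul_apply, ih]
    by_cases hk : Even k
    · have hk' : ¬ Even (k + 1) := by simpa [Nat.even_add_one] using hk
      simp only [hk, hk', if_true, if_false]
      rw [sref_apply, chU]
      simp only [map_add, map_smul, smul_eq_mul, hdiag, hsymm (Δ j) (Δ i)]
      module
    · have hk' : Even (k + 1) := by simpa [Nat.even_add_one] using hk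
      simp only [hk, hk', if_true, if_false]
      rw [sref_apply, chU]
      simp only [map_add, map_smul, smul_eq_mul, hdiag]
      module

lemma alt_two_mul (i j : ι) (k : ℕ) :
    ((CoxeterSystem.alternatingWord i j (2 * k)).map (sref B Δ hdiag)).prod =
      (sref B Δ hdiag i * sref B Δ hdiag j) ^ k := by
  induction k with
  | zero => simp [CoxeterSystem.alternatingWord]
  | succ k ih =>
    rw [pow_succ', ← ih, show 2 * (k + 1) = 2 * k + 1 + 1 by ring,
      CoxeterSystem.alternatingWord_succ', CoxeterSystem.alternatingWord_succ']
    have h1 : Even (2 * k) := by simp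
    have h2 : ¬ Even (2 * k + 1) := by simp
    simp [h1, h2, mul_assoc]

include hsymm in
lemma pow_fix (i j : ι) (m : ℕ) (hm : 2 ≤ m) (h : B (Δ i) (Δ j) = -Real.cos (Real.pi / m)) :
    ((sref B Δ hdiag i * sref B Δ hdiag j) ^ m) (Δ i) = Δ i := by
  rw [← alt_two_mul, sref_alt B Δ hsymm, h, neg_neg]
  have hs := sin_pi_div_pos hm
  have hm' : (m : ℝ) ≠ 0 := by
    have : (2 : ℝ) ≤ m := by exact_mod_cast hm
    linarith
  have h0 : chU (Real.cos (Real.pi / m)) (2 * m) = 0 := by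
    have := chU_cos (Real.pi / m) (2 * m)
    have e : ((2 * m : ℕ) : ℝ) * (Real.pi / m) = 2 * Real.pi := by push_cast; field_simp
    rw [e, Real.sin_two_pi] at this
    exact (mul_eq_zero.mp this).resolve_right hs.ne'
  have h1 : chU (Real.cos (Real.pi / m)) (2 * m + 1) = 1 := by
    have := chU_cos (Real.pi / m) (2 * m + 1)
    have e : ((2 * m + 1 : ℕ) : ℝ) * (Real.pi / m) = Real.pi / m + 2 * Real.pi := by
      push_cast; field_simp; ring
    rw [e, Real.sin_add_two_pi] at this
    exact mul_right_cancel₀ hs.ne' (by rw [this, one_mul])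
  simp [h0, h1]

include hsymm in
lemma pow_eq_one (i j : ι) (m : ℕ) (hm : 2 ≤ m) (h : B (Δ i) (Δ j) = -Real.cos (Real.pi / m)) :
    (sref B Δ hdiag i * sref B Δ hdiag j) ^ m = 1 := by
  have f1 := pow_fix B Δ hsymm hdiag i j m hm h
  have f2 : ((sref B Δ hdiag i * sref B Δ hdiag j) ^ m) (Δ j) = Δ j := by
    have f3 := pow_fix B Δ hsymm hdiag j i m hm (by rw [hsymm, h])
    have e : (sref B Δ hdiag i * sref B Δ hdiag j) ^ m *
        (sref B Δ hdiag j * sref B Δ hdiag i) ^ m = 1 := by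
      have : sref B Δ hdiag i * sref B Δ hdiag j = (sref B Δ hdiag j * sref B Δ hdiag i)⁻¹ := by
        rw [eq_comm, inv_eq_iff_mul_eq_one, mul_assoc, ← mul_assoc (sref B Δ hdiag i),
          sref_mul_self, one_mul, sref_mul_self]
      rw [this, inv_pow, inv_mul_cancel]
    conv_lhs => rw [← f3]
    rw [← LinearEquiv.mul_apply, e]; rfl
  have hc : 1 - (B (Δ i) (Δ j)) ^ 2 ≠ 0 := by
    have := sin_pi_div_pos hm
    have h2 := Real.sin_sq_add_cos_sq (Real.pi / m)
    rw [h]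
    have : 0 < Real.sin (Real.pi / m) ^ 2 := by positivity
    nlinarith
  have f4 : ∀ z, B (Δ i) z = 0 → B (Δ j) z = 0 → ∀ n : ℕ,
      ((sref B Δ hdiag i * sref B Δ hdiag j) ^ n) z = z := by
    intro z h1 h2 n
    induction n with
    | zero => simp
    | succ n ih =>
      rw [pow_succ', LinearEquiv.mul_apply, ih, LinearEquiv.mul_apply]
      simp [sref_apply, h1, h2]
  ext z
  set b := B (Δ i) (Δ j) with hb
  set a1 := (B (Δ i) z - b * B (Δ j) z) / (1 - b ^ 2) with ha1
  set a2 := (B (Δ j) z - b * B (Δ i) z) / (1 - b ^ 2) with ha2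
  have hz := f4 (z - a1 • Δ i - a2 • Δ j)
    (by simp only [map_sub, map_smul, smul_eq_mul, hdiag, ← hb, ha1, ha2]
        field_simp; ring)
    (by simp only [map_sub, map_smul, smul_eq_mul, hdiag, hsymm (Δ j) (Δ i), ← hb, ha1, ha2]
        field_simp; ring) m
  simp only [map_sub, map_smul, f1, f2] at hz
  have := sub_left_injective (sub_left_injective hz)
  simpa using this

open Classical in
/-- order attached to a real -/
def ordR (x : ℝ) : ℕ :=
  if h : ∃ k : ℕ, 2 ≤ k ∧ x = -Real.cos (Real.pi / (k : ℝ)) then h.choose else 0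

lemma ordR_spec (x : ℝ) (h : ordR x ≠ 0) :
    2 ≤ ordR x ∧ x = -Real.cos (Real.pi / (ordR x : ℝ)) := by
  unfold ordR at h ⊢
  split_ifs with h' <;> simp_all
  exact h'.choose_spec

lemma ordR_zero (x : ℝ) (h : ordR x = 0) :
    ¬ ∃ k : ℕ, 2 ≤ k ∧ x = -Real.cos (Real.pi / (k : ℝ)) := by
  intro h'
  unfold ordR at h
  rw [dif_pos h'] at h
  have := h'.choose_spec.1
  omega

open Classical in
/-- Coxeter matrix -/
def cmat : CoxeterMatrix ι where
  M := Matrix.of fun i j => if i = j then 1 else ordR (B (Δ i) (Δ j))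
  isSymm := by
    ext i j
    simp only [Matrix.transpose_apply, Matrix.of_apply, hsymm (Δ j) (Δ i), eq_comm]
  diagonal := by simp
  off_diagonal i j hij := by
    simp only [Matrix.of_apply, if_neg hij]
    intro h
    have := (ordR_spec (B (Δ i) (Δ j)) (by omega)).1
    omega

lemma cmat_ne {i j : ι} (h : i ≠ j) : cmat B Δ hsymm i j = ordR (B (Δ i) (Δ j)) := by
  simp [cmat, h]

lemma liftable : (cmat B Δ hsymm).IsLiftable (sref B Δ hdiag) := by
  intro i j
  by_cases h : i = j
  · subst h
    simp [sref_mul_self]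
  · rw [cmat_ne B Δ hsymm h]
    by_cases h0 : ordR (B (Δ i) (Δ j)) = 0
    · simp [h0]
    · have := ordR_spec _ h0
      exact pow_eq_one B Δ hsymm hdiag i j _ this.1 this.2

/-- the geometric representation -/
def grep : (cmat B Δ hsymm).Group →* (V ≃ₗ[ℝ] V) :=
  (cmat B Δ hsymm).toCoxeterSystem.lift ⟨sref B Δ hdiag, liftable B Δ hsymm hdiag⟩

lemma grep_simple (i : ι) : grep B Δ hsymm hdiag ((cmat B Δ hsymm).toCoxeterSystem.simple i)
    = sref B Δ hdiag i := by
  simp only [grep]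
  exact CoxeterSystem.lift_apply_simple _ _ _

lemma grep_word (l : List ι) :
    grep B Δ hsymm hdiag ((cmat B Δ hsymm).toCoxeterSystem.wordProd l)
    = (l.map (sref B Δ hdiag)).prod := by
  rw [CoxeterSystem.wordProd, map_list_prod, List.map_map]
  have : (⇑(grep B Δ hsymm hdiag) ∘ (cmat B Δ hsymm).toCoxeterSystem.simple) = sref B Δ hdiag :=
    funext fun a => grep_simple B Δ hsymm hdiag a
  rw [this]

include hoff in
lemma grep_pos (n : ℕ) : ∀ (w : (cmat B Δ hsymm).Group) (i : ι),
    (cmat B Δ hsymm).toCoxeterSystem.length w = n →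
    ¬ (cmat B Δ hsymm).toCoxeterSystem.IsRightDescent w i →
    ∀ p, 0 ≤ Δ.repr (grep B Δ hsymm hdiag w (Δ i)) p := by
  induction n using Nat.strong_induction_on with
  | _ n IH =>
  intro w i hn hi p
  set cs := (cmat B Δ hsymm).toCoxeterSystem with hcs
  by_cases hw : w = 1
  · subst hw
    rw [map_one, LinearEquiv.coe_one, id, Module.Basis.repr_self]
    classical
    rw [Finsupp.single_apply]
    split_ifs <;> norm_num
  obtain ⟨j, hj⟩ := cs.exists_rightDescent_of_ne_one hw
  have hij : i ≠ j := by rintro rfl; exact hi hj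
  let P : ℕ → Prop := fun a => ∃ (v : (cmat B Δ hsymm).Group) (k : ℕ), 1 ≤ k ∧
    cs.length v = a ∧ cs.length v + k = cs.length w ∧
    w = v * cs.wordProd (CoxeterSystem.alternatingWord i j k)
  have hP : ∃ a, P a := by
    refine ⟨_, w * cs.simple j, 1, le_rfl, rfl, cs.isRightDescent_iff.mp hj, ?_⟩
    simp [CoxeterSystem.alternatingWord]
  classical
  obtain ⟨v, k, hk, hva, hvk, hwv⟩ := Nat.find_spec hP
  have hmin : ∀ b, P b → cs.length v ≤ b := fun b hb => hva ▸ Nat.find_min' hP hb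
  have d1 : ¬ cs.IsRightDescent v (if Even k then j else i) := by
    intro h
    have h' := cs.isRightDescent_iff.mp h
    have := hmin (cs.length (v * cs.simple (if Even k then j else i)))
      ⟨_, k + 1, by omega, rfl, by omega, by
        rw [CoxeterSystem.alternatingWord_succ', cs.wordProd_cons, ← mul_assoc,
          cs.simple_mul_simple_cancel_right]
        exact hwv⟩
    omega
  have d2 : ¬ cs.IsRightDescent v (if Even k then i else j) := by
    intro h
    have h' := cs.isRightDescent_iff.mp h
    obtain ⟨k', rfl⟩ : ∃ k', k = k' + 1 := ⟨k - 1, by omega⟩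
    have e : (if Even (k' + 1) then i else j) = (if Even k' then j else i) := by
      by_cases hk : Even k' <;> simp [hk, Nat.even_add_one]
    rw [e] at h'
    rw [CoxeterSystem.alternatingWord_succ', cs.wordProd_cons, ← mul_assoc] at hwv
    have h3 := cs.length_mul_le (v * cs.simple (if Even k' then j else i))
      (cs.wordProd (CoxeterSystem.alternatingWord i j k'))
    have h4 := cs.length_wordProd_le (CoxeterSystem.alternatingWord i j k')
    rw [CoxeterSystem.length_alternatingWord] at h4
    rw [← hwv] at h3
    omega
  have di : ¬ cs.IsRightDescent v i := by
    by_cases h : Even k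
    · simpa [h] using d2
    · simpa [h] using d1
  have dj : ¬ cs.IsRightDescent v j := by
    by_cases h : Even k
    · simpa [h] using d1
    · simpa [h] using d2
  have pi := IH (cs.length v) (by omega) v i rfl di p
  have pj := IH (cs.length v) (by omega) v j rfl dj p
  have hM : cmat B Δ hsymm j i ≠ 0 → k + 1 ≤ cmat B Δ hsymm j i := by
    intro h0
    by_contra hlt
    have hr := cs.not_isReduced_alternatingWord j i h0 (m := k + 1) (by omega)
    have h4 := cs.length_wordProd_le (CoxeterSystem.alternatingWord j i (k + 1))
    rw [CoxeterSystem.IsReduced, CoxeterSystem.length_alternatingWord] at hr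
    rw [CoxeterSystem.length_alternatingWord] at h4
    have h5 := cs.not_isRightDescent_iff.mp hi
    rw [hwv, mul_assoc, ← cs.wordProd_concat, ← CoxeterSystem.alternatingWord_succ, ← hwv] at h5
    have h6 := cs.length_mul_le v (cs.wordProd (CoxeterSystem.alternatingWord j i (k + 1)))
    omega
  have hU : 0 ≤ chU (-B (Δ i) (Δ j)) k ∧ 0 ≤ chU (-B (Δ i) (Δ j)) (k + 1) := by
    rw [cmat_ne B Δ hsymm hij.symm, hsymm (Δ j) (Δ i)] at hM
    by_cases h0 : ordR (B (Δ i) (Δ j)) = 0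
    · have h1 := (hoff i j hij).resolve_right (ordR_zero _ h0)
      exact ⟨chU_nonneg_of_one_le _ (by linarith) _, chU_nonneg_of_one_le _ (by linarith) _⟩
    · have h1 := hM h0
      obtain ⟨h2, h3⟩ := ordR_spec _ h0
      have e : -B (Δ i) (Δ j) = Real.cos (Real.pi / (ordR (B (Δ i) (Δ j)) : ℝ)) := by
        linarith
      generalize ordR (B (Δ i) (Δ j)) = m at *
      rw [e]
      exact ⟨chU_nonneg_cos h2 (by omega), chU_nonneg_cos h2 h1⟩
  rw [hwv, map_mul, LinearEquiv.mul_apply, grep_word, sref_alt B Δ hsymm]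
  split_ifs
  · simp only [map_add, map_smul, Finsupp.add_apply, Finsupp.smul_apply, smul_eq_mul]
    exact add_nonneg (mul_nonneg hU.2 pi) (mul_nonneg hU.1 pj)
  · simp only [map_add, map_smul, Finsupp.add_apply, Finsupp.smul_apply, smul_eq_mul]
    exact add_nonneg (mul_nonneg hU.1 pi) (mul_nonneg hU.2 pj)

include hoff in
lemma grep_sign (w : (cmat B Δ hsymm).Group) (i : ι) :
    (∀ p, 0 ≤ Δ.repr (grep B Δ hsymm hdiag w (Δ i)) p) ∨
    (∀ p, Δ.repr (grep B Δ hsymm hdiag w (Δ i)) p ≤ 0) := by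
  by_cases h : (cmat B Δ hsymm).toCoxeterSystem.IsRightDescent w i
  · right
    intro p
    have h' := (CoxeterSystem.isRightDescent_iff_not_isRightDescent_mul _).mp h
    have := grep_pos B Δ hsymm hdiag hoff _ _ i rfl h' p
    rw [map_mul, LinearEquiv.mul_apply, grep_simple, sref_self, map_neg, map_neg,
      Finsupp.neg_apply] at this
    linarith
  · left
    exact grep_pos B Δ hsymm hdiag hoff _ _ i rfl h

include hsymm hdiag in
lemma cox_le_range : cox B Δ ≤ (grep B Δ hsymm hdiag).range := by
  rw [cox, Subgroup.closure_le]
  rintro e ⟨i, hi⟩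
  refine ⟨(cmat B Δ hsymm).toCoxeterSystem.simple i, ?_⟩
  rw [grep_simple]
  ext u
  rw [sref_apply, hi, hdiag, div_one]

include hsymm hdiag hoff in
lemma Phi_sign (ρ : V) (hρ : ρ ∈ Phi B Δ) :
    (∀ p, 0 ≤ Δ.repr ρ p) ∨ (∀ p, Δ.repr ρ p ≤ 0) := by
  obtain ⟨w, hw, i, rfl⟩ := hρ
  obtain ⟨w', rfl⟩ := cox_le_range B Δ hsymm hdiag hw
  exact grep_sign B Δ hsymm hdiag hoff w' i

lemma sref_mem (i : ι) : sref B Δ hdiag i ∈ cox B Δ := by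
  apply Subgroup.subset_closure
  refine ⟨i, fun u => ?_⟩
  rw [sref_apply, hdiag, div_one]

lemma Phi_smul {w : V ≃ₗ[ℝ] V} (hw : w ∈ cox B Δ) {ρ : V} (hρ : ρ ∈ Phi B Δ) :
    w ρ ∈ Phi B Δ := by
  obtain ⟨v, hv, i, rfl⟩ := hρ
  exact ⟨w * v, mul_mem hw hv, i, rfl⟩

include hsymm hdiag in
lemma Phi_norm {ρ : V} (hρ : ρ ∈ Phi B Δ) : B ρ ρ = 1 := by
  obtain ⟨w, hw, i, rfl⟩ := hρ
  have key : ∀ u : V, B (w u) (w u) = B u u := by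
    rw [cox] at hw
    induction hw using Subgroup.closure_induction with
    | mem x hx =>
      obtain ⟨j, hj⟩ := hx
      intro u
      rw [hj, hdiag, div_one]
      simp only [map_sub, map_smul, smul_eq_mul, hdiag, LinearMap.sub_apply,
        LinearMap.smul_apply, hsymm u (Δ j)]
      ring
    | one => intro u; rfl
    | mul x y _ _ hx hy => intro u; rw [LinearEquiv.mul_apply, hx, hy]
    | inv x _ hx =>
      intro u
      have := hx (x⁻¹ u)
      rw [← this, ← LinearEquiv.mul_apply, mul_inv_cancel]; rfl
  rw [key, hdiag]

include hsymm hdiag hoff in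
/-- near a simple root there is no other root -/
lemma simple_isolated (i : ι) : ∀ᶠ x in 𝓝 (Δ i), x ∈ Phi B Δ → x = Δ i := by
  haveI : FiniteDimensional ℝ V := Δ.finiteDimensional_of_finite
  have hcont : ∀ L : V →ₗ[ℝ] ℝ, Continuous L := fun L => L.continuous_of_finiteDimensional
  have h1 : ∀ᶠ x in 𝓝 (Δ i), 0 < Δ.coord i x := by
    apply (hcont (Δ.coord i)).continuousAt.eventually_const_lt
    simp
  have h2 : ∀ᶠ x in 𝓝 (Δ i), Δ.coord i (sref B Δ hdiag i x) < 0 := by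
    apply (hcont ((Δ.coord i).comp (sref B Δ hdiag i).toLinearMap)).continuousAt.eventually_lt_const
    simp [sref_self]
  filter_upwards [h1, h2] with x hx1 hx2 hx
  have p1 : ∀ p, 0 ≤ Δ.repr x p := by
    refine (Phi_sign B Δ hsymm hdiag hoff x hx).resolve_right fun h => ?_
    have := h i
    rw [Module.Basis.coord_apply] at hx1
    linarith
  have p2 : ∀ p, Δ.repr (sref B Δ hdiag i x) p ≤ 0 := by
    refine (Phi_sign B Δ hsymm hdiag hoff _
      (Phi_smul B Δ (sref_mem B Δ hdiag i) hx)).resolve_left fun h => ?_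
    have := h i
    rw [Module.Basis.coord_apply] at hx2
    linarith
  have p3 : ∀ p, p ≠ i → Δ.repr x p = 0 := by
    intro p hp
    have := p2 p
    rw [sref_apply, map_sub, map_smul, Module.Basis.repr_self, Finsupp.sub_apply,
      Finsupp.smul_apply, Finsupp.single_eq_of_ne hp] at this
    have h0 := p1 p
    simp at this
    linarith
  have p4 : x = Δ.repr x i • Δ i := by
    conv_lhs => rw [← Δ.sum_repr x]
    apply Finset.sum_eq_single
    · intro b _ hb
      rw [p3 b hb, zero_smul]
    · simp
  have p5 := Phi_norm B Δ hsymm hdiag hx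
  rw [p4] at p5
  simp only [map_smul, LinearMap.smul_apply, smul_eq_mul, hdiag] at p5
  have p6 : Δ.repr x i = 1 := by nlinarith [p1 i]
  rw [p4, p6, one_smul]

end cox

/-- The root system `Φ` is a discrete subset of `V`: no point of `Φ` is an
accumulation point of `Φ`. -/
theorem statement2 (B : LinearMap.BilinForm ℝ V) (Δ : Module.Basis ι ℝ V)
    (hsymm : ∀ u v : V, B u v = B v u)
    (hdiag : ∀ i : ι, B (Δ i) (Δ i) = 1)
    (hoff : ∀ i j : ι, i ≠ j → B (Δ i) (Δ j) ≤ -1 ∨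
      ∃ k : ℕ, 2 ≤ k ∧ B (Δ i) (Δ j) = -Real.cos (Real.pi / (k : ℝ))) :
    ∀ ρ ∈ Phi B Δ, ¬ AccPt ρ (𝓟 (Phi B Δ)) := by
  rintro ρ ⟨w, hw, i, rfl⟩ hacc
  haveI : FiniteDimensional ℝ V := Δ.finiteDimensional_of_finite
  rw [accPt_iff_frequently] at hacc
  apply hacc
  have hc : Continuous (w⁻¹ : V ≃ₗ[ℝ] V).toLinearMap :=
    LinearMap.continuous_of_finiteDimensional _
  have hinv : (w⁻¹ : V ≃ₗ[ℝ] V) (w (Δ i)) = Δ i := by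
    rw [← LinearEquiv.mul_apply, inv_mul_cancel]; rfl
  have ht : Tendsto (w⁻¹ : V ≃ₗ[ℝ] V).toLinearMap (𝓝 (w (Δ i))) (𝓝 (Δ i)) := by
    have := hc.tendsto (w (Δ i))
    rwa [LinearEquiv.coe_coe, hinv] at this
  filter_upwards [ht.eventually (simple_isolated B Δ hsymm hdiag hoff i)] with y hy
  rintro ⟨hne, hmem⟩
  apply hne
  have h := hy (Phi_smul B Δ (inv_mem hw) hmem)
  rw [LinearEquiv.coe_coe] at h
  rw [← h, ← LinearEquiv.mul_apply, mul_inv_cancel]; rfl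
end
end
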